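/- Conservation theorem for the λI-calculus: let M be a λI-term (every abstraction λx.N occurring in M satisfies x ∈ FV(N)). Then M is β-normalizable if and only if M is strongly β-normalizable. -/

import Mathlib

/-! Ordinary λ-terms, in de Bruijn notation. -/
inductive Lam : Type
  | var : ℕ → Lam
  | lam : Lam → Lam
  | app : Lam → Lam → Lam
  deriving DecidableEq

namespace Lam

/-- Shift the free indices `≥ d` up by one. -/
def lift (d : ℕ) : Lam → Lam
  | var n => if n < d then var n else var (n + 1)
  | lam M => lam (lift (d + 1) M)
  | app P Q => app (lift d P) (lift d Q)

/-- Capture-avoiding substitution of `N` for the free variable `k`. -/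
def subst : Lam → ℕ → Lam → Lam
  | var n, k, N => if n = k then N else if k < n then var (n - 1) else var n
  | lam M, k, N => lam (subst M (k + 1) (lift 0 N))
  | app P Q, k, N => app (subst P k N) (subst Q k N)

/-- Number of free occurrences of the variable `k`. -/
def count (k : ℕ) : Lam → ℕ
  | var n => if n = k then 1 else 0
  | lam M => count (k + 1) M
  | app P Q => count k P + count k Q

/-- One-step β-reduction. -/
inductive Beta : Lam → Lam → Prop
  | beta (M N : Lam) : Beta (app (lam M) N) (subst M 0 N)
  | lam {M M'} : Beta M M' → Beta (lam M) (lam M')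
  | appL {P P' Q} : Beta P P' → Beta (app P Q) (app P' Q)
  | appR {P Q Q'} : Beta Q Q' → Beta (app P Q) (app P Q')

/-- The head of the application spine is a variable, with no λ on the spine. -/
def neutral : Lam → Bool
  | var _ => true
  | lam _ => false
  | app P _ => neutral P

/-- Head-normal forms: `λx₁…λxₘ. x N₁ … Nₙ`. -/
def isHNF : Lam → Prop
  | var _ => True
  | lam M => isHNF M
  | app P _ => neutral P = true

/-- The head-reduction function `H`: contracts the head redex, identity on head-normal
forms. -/
def H : Lam → Lam
  | var n => var n
  | lam M => lam (H M)
  | app (lam P) Q => subst P 0 Q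
  | app (var n) Q => app (var n) Q
  | app (app P₁ P₂) Q => app (H (app P₁ P₂)) Q

/-- The left-parallel reduction function `L`: identity on β-normal forms, propagated to
the arguments on head-normal forms, contraction of the head redex otherwise. -/
def L : Lam → Lam
  | var n => var n
  | lam M => lam (L M)
  | app (lam P) Q => subst P 0 Q
  | app (var n) Q => app (var n) (L Q)
  | app (app P₁ P₂) Q =>
      if neutral (app P₁ P₂) then app (L (app P₁ P₂)) (L Q)
      else app (L (app P₁ P₂)) Q

/-- Iterated application `M N₁ … Nₙ`. -/
def mkApps (M : Lam) (Ns : List Lam) : Lam := Ns.foldl app M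

/-- All free variables are `< d`. -/
def ClosedAt (d : ℕ) : Lam → Prop
  | var n => n < d
  | lam M => ClosedAt (d + 1) M
  | app P Q => ClosedAt d P ∧ ClosedAt d Q

/-- `M` is head-normalizable: it β-reduces in finitely many steps to a head-normal form. -/
def HeadNormalizable (M : Lam) : Prop :=
  ∃ N, Relation.ReflTransGen Beta M N ∧ isHNF N

/-- `M` is a β-normal form: it contains no β-redex, i.e. admits no β-step. -/
def BetaNF (M : Lam) : Prop := ¬∃ N, Beta M N

/-- `M` is β-normalizable: it β-reduces in finitely many steps to a β-normal form. -/
def BetaNormalizable (M : Lam) : Prop :=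
  ∃ N, Relation.ReflTransGen Beta M N ∧ BetaNF N

/-- `M` is strongly β-normalizable: no infinite β-reduction sequence starts from `M`. -/
def StronglyNormalizable (M : Lam) : Prop := Acc (fun N M' => Beta M' N) M

end Lam

/-! Rigid resource terms (the nonzero ones), in de Bruijn notation:
`a ::= x | λx.a | ⟨c⟩d⃗` with `d⃗` a list of rigid terms.
The term `0` is represented by `none : Option Rig`. -/
inductive Rig : Type
  | var : ℕ → Rig
  | lam : Rig → Rig
  | app : Rig → List Rig → Rig

namespace Rig

mutual
/-- Number of free occurrences of the variable `k` in a rigid term. -/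
def countR (k : ℕ) : Rig → ℕ
  | var n => if n = k then 1 else 0
  | lam a => countR (k + 1) a
  | app c ds => countR k c + countRList k ds
termination_by a => sizeOf a

def countRList (k : ℕ) : List Rig → ℕ
  | [] => 0
  | d :: ds => countR k d + countRList k ds
termination_by ds => sizeOf ds
end

mutual
/-- Shift the free indices `≥ d` up by one. -/
def liftR (d : ℕ) : Rig → Rig
  | var n => if n < d then var n else var (n + 1)
  | lam a => lam (liftR (d + 1) a)
  | app c ds => app (liftR d c) (liftRList d ds)
termination_by a => sizeOf a

def liftRList (d : ℕ) : List Rig → List Rig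
  | [] => []
  | a :: as => liftR d a :: liftRList d as
termination_by as => sizeOf as
end

mutual
/-- Rigid substitution `a[b⃗/k]`: the list `b⃗` is distributed, in order, over the
free occurrences of the variable `k`; the result is `none` (i.e. `0`) when
`|b⃗| ≠ n_k(a)`. -/
def rsubst (k : ℕ) : Rig → List Rig → Option Rig
  | var n, bs =>
      if n = k then (match bs with | [b] => some b | _ => none)
      else (match bs with
            | [] => some (if k < n then var (n - 1) else var n)
            | _ => none)
  | lam a, bs => (rsubst (k + 1) a (liftRList 0 bs)).map lam
  | app c ds, bs =>
      match rsubst k c (bs.take (countR k c)), rsubstList k ds (bs.drop (countR k c)) with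
      | some c', some ds' => some (app c' ds')
      | _, _ => none
termination_by a _ => sizeOf a

def rsubstList (k : ℕ) : List Rig → List Rig → Option (List Rig)
  | [], bs => if bs.isEmpty then some [] else none
  | d :: ds, bs =>
      match rsubst k d (bs.take (countR k d)), rsubstList k ds (bs.drop (countR k d)) with
      | some d', some ds' => some (d' :: ds')
      | _, _ => none
termination_by ds _ => sizeOf ds
end

/-- One-step rigid resource reduction `→_r` (contextual closure of
`⟨λx.a⟩b⃗ →_r a[b⃗/x]`); the result may be `0` (i.e. `none`), which annihilates
the surrounding context. -/
inductive RStep : Rig → Option Rig → Prop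
  | beta (a : Rig) (bs : List Rig) : RStep (app (lam a) bs) (rsubst 0 a bs)
  | lam {a r} : RStep a r → RStep (lam a) (r.map lam)
  | head {c r} (ds : List Rig) : RStep c r → RStep (app c ds) (r.map (fun c' => app c' ds))
  | arg {d r} (c : Rig) (ds₁ ds₂ : List Rig) :
      RStep d r → RStep (app c (ds₁ ++ d :: ds₂)) (r.map (fun d' => app c (ds₁ ++ d' :: ds₂)))

/-- `→_r` on rigid terms extended with `0`; `0` is inert. -/
inductive RStepO : Option Rig → Option Rig → Prop
  | mk {a r} : RStep a r → RStepO (some a) r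

/-- `r` is a `→_r`-normal form (`0` is one). -/
def RNormal (r : Option Rig) : Prop := ¬∃ r', RStepO r r'

/-- The head of the application spine is a variable, with no λ on the spine. -/
def rNeutral : Rig → Bool
  | var _ => true
  | lam _ => false
  | app c _ => rNeutral c

/-- Rigid head-normal forms among nonzero terms: `λx₁…λxₘ.⟨…⟨x⟩d⃗₁…⟩d⃗ₙ`
(the term `0` is a head-normal form, but it is treated separately). -/
def rIsHNF : Rig → Prop
  | var _ => True
  | lam a => rIsHNF a
  | app c _ => rNeutral c = true

/-- The rigid head-reduction function `H_r`: contracts the head redex, identity on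
head-normal forms; the result may be `0` (i.e. `none`). -/
def Hr : Rig → Option Rig
  | var n => some (var n)
  | lam a => (Hr a).map lam
  | app (lam a) bs => rsubst 0 a bs
  | app (var n) ds => some (app (var n) ds)
  | app (app c₁ c₂) ds => (Hr (app c₁ c₂)).map (fun c' => app c' ds)

/-- `H_r` extended to terms-or-`0`. -/
def HrO : Option Rig → Option Rig := fun r => r.bind Hr

mutual
/-- The rigid left-parallel reduction function `L_r`: identity on `→_r`-normal forms,
applied componentwise to the argument lists on head-normal forms, contraction of the
head redex otherwise; the result may be `0` (i.e. `none`). -/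
def Lr : Rig → Option Rig
  | var n => some (var n)
  | lam a => (Lr a).map lam
  | app (lam a) bs => rsubst 0 a bs
  | app (var n) ds => (LrList ds).map (fun ds' => app (var n) ds')
  | app (app c₁ c₂) ds =>
      if rNeutral (app c₁ c₂) then
        match Lr (app c₁ c₂), LrList ds with
        | some c', some ds' => some (app c' ds')
        | _, _ => none
      else (Lr (app c₁ c₂)).map (fun c' => app c' ds)
termination_by a => sizeOf a

def LrList : List Rig → Option (List Rig)
  | [] => some []
  | d :: ds =>
      match Lr d, LrList ds with
      | some d', some ds' => some (d' :: ds')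
      | _, _ => none
termination_by ds => sizeOf ds
end

/-- `L_r` extended to terms-or-`0`. -/
def LrO : Option Rig → Option Rig := fun r => r.bind Lr

/-- Positive resource terms: no empty list/multiset occurs as the argument of an
application. -/
inductive rPositive : Rig → Prop
  | var (n : ℕ) : rPositive (var n)
  | lam {a} : rPositive a → rPositive (lam a)
  | app {c : Rig} {ds : List Rig} :
      rPositive c → ds ≠ [] → (∀ d ∈ ds, rPositive d) → rPositive (app c ds)

end Rig

/-- The rigid expansion `T_r(M)` of a λ-term (equivalently, the support of its Taylor
expansion, with multisets presented by lists: `Texp M` is closed under permutation of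
argument lists). -/
def Texp : Lam → Set Rig
  | Lam.var n => {Rig.var n}
  | Lam.lam M => {a | ∃ b ∈ Texp M, a = Rig.lam b}
  | Lam.app P Q => {a | ∃ c ∈ Texp P, ∃ ds : List Rig, (∀ d ∈ ds, d ∈ Texp Q) ∧ a = Rig.app c ds}

namespace Rig

/-- The support of the `n`-linear substitution `∂_k a · b̄`, where the multiset `b̄` is
presented by the list `bs`: the finite formal sum (multiset) of all nonzero results of
rigid substitutions along bijective assignments, i.e. permutations of `bs`. -/
def permSubst (k : ℕ) (a : Rig) (bs : List Rig) : Multiset Rig :=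
  ↑(bs.permutations.filterMap (fun bs' => rsubst k a bs'))

/-- One step of non-erasing ε-resource reduction `→^{¬e}_{∂ε}` out of a single resource
term, producing a finite formal sum (a multiset) of resource terms: non-erasing resource
β-steps `⟨λx.a⟩b̄ → ∂_x a · b̄` (with `x ∈ FV(a)`) and resource σ₁-steps, under any
context. -/
inductive NEStep : Rig → Multiset Rig → Prop
  | beta {a : Rig} (bs : List Rig) :
      0 < countR 0 a → NEStep (app (lam a) bs) (permSubst 0 a bs)
  | sigma (a : Rig) (ts qs : List Rig) :
      NEStep (app (app (lam a) ts) qs) {app (lam (app a (liftRList 0 qs))) ts}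
  | lam {a σ} : NEStep a σ → NEStep (lam a) (σ.map lam)
  | head {c σ} (ds : List Rig) : NEStep c σ → NEStep (app c ds) (σ.map (fun c' => app c' ds))
  | arg {d σ} (c : Rig) (ds₁ ds₂ : List Rig) :
      NEStep d σ → NEStep (app c (ds₁ ++ d :: ds₂)) (σ.map (fun d' => app c (ds₁ ++ d' :: ds₂)))

/-- Non-erasing ε-resource reduction on finite formal sums, extended by linearity. -/
def NEStepSum (σ τ : Multiset Rig) : Prop :=
  ∃ (a : Rig) (ρ υ : Multiset Rig), σ = a ::ₘ ρ ∧ NEStep a υ ∧ τ = υ + ρ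

/-- `σ` is a `→^{¬e}_{∂ε}`-normal form. -/
def NENormal (σ : Multiset Rig) : Prop := ¬∃ τ, NEStepSum σ τ

end Rig

/-- One step of non-erasing ε-reduction on λ-terms: non-erasing β-steps
`(λx.M)N → M[N/x]` (with `x ∈ FV(M)`) together with σ₁-steps
`((λx.M)N)P → (λx.MP)N` (`x ∉ FV(P)`), under any context. -/
inductive NEeps : Lam → Lam → Prop
  | beta {M : Lam} (N : Lam) :
      0 < Lam.count 0 M → NEeps (Lam.app (Lam.lam M) N) (Lam.subst M 0 N)
  | sigma (M N P : Lam) :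
      NEeps (Lam.app (Lam.app (Lam.lam M) N) P)
        (Lam.app (Lam.lam (Lam.app M (Lam.lift 0 P))) N)
  | lam {M M'} : NEeps M M' → NEeps (Lam.lam M) (Lam.lam M')
  | appL {P P' Q} : NEeps P P' → NEeps (Lam.app P Q) (Lam.app P' Q)
  | appR {P Q Q'} : NEeps Q Q' → NEeps (Lam.app P Q) (Lam.app P Q')

/-- The set `S` of λ-terms. -/
inductive SLam : Lam → Prop
  | varApp (n : ℕ) (Ms : List Lam) :
      (∀ M ∈ Ms, SLam M) → SLam (Lam.mkApps (Lam.var n) Ms)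
  | lam {M} : SLam M → SLam (Lam.lam M)
  | redex (M₀ M₁ : Lam) (Ms : List Lam) :
      SLam M₁ → SLam (Lam.mkApps (Lam.subst M₀ 0 M₁) Ms) →
      SLam (Lam.mkApps (Lam.app (Lam.lam M₀) M₁) Ms)

/-- λI-terms: every abstraction binds a variable occurring free in its body. -/
def LamI : Lam → Prop
  | Lam.var _ => True
  | Lam.lam M => LamI M ∧ 0 < Lam.count 0 M
  | Lam.app P Q => LamI P ∧ LamI Q

namespace Lam

theorem lift_lift (M : Lam) : ∀ i j, i ≤ j → lift i (lift j M) = lift (j+1) (lift i M) := by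
  induction M with
  | var n => intro i j h; simp only [lift]; split_ifs <;> simp only [lift] <;> split_ifs <;>
      first | rfl | omega
  | lam M ih => intro i j h; simp only [lift]; rw [ih _ _ (by omega)]
  | app P Q ihP ihQ => intro i j h; simp only [lift]; rw [ihP _ _ h, ihQ _ _ h]

theorem lift_subst_le (M : Lam) : ∀ d k N, k ≤ d →
    lift d (subst M k N) = subst (lift (d+1) M) k (lift d N) := by
  induction M with
  | var n =>
    intro d k N h
    simp only [lift, subst]
    split_ifs <;> simp only [lift, subst] <;> split_ifs <;>
      first | rfl | omega | (congr 1; omega)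
  | lam M ih => intro d k N h; simp only [lift, subst]; rw [ih _ _ _ (by omega), lift_lift _ 0 d (by omega)]
  | app P Q ihP ihQ => intro d k N h; simp only [lift, subst]; rw [ihP _ _ _ h, ihQ _ _ _ h]

theorem lift_subst_ge (M : Lam) : ∀ d k N, d ≤ k →
    lift d (subst M k N) = subst (lift d M) (k+1) (lift d N) := by
  induction M with
  | var n =>
    intro d k N h
    simp only [lift, subst]
    split_ifs <;> simp only [lift, subst] <;> split_ifs <;>
      first | rfl | omega | (congr 1; omega)
  | lam M ih => intro d k N h; simp only [lift, subst]; rw [ih _ _ _ (by omega), lift_lift _ 0 d (by omega)]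
  | app P Q ihP ihQ => intro d k N h; simp only [lift, subst]; rw [ihP _ _ _ h, ihQ _ _ _ h]

theorem subst_lift (M : Lam) : ∀ k N, subst (lift k M) k N = M := by
  induction M with
  | var n =>
    intro k N
    simp only [lift]
    split_ifs <;> simp only [subst] <;> split_ifs <;> first | rfl | omega
  | lam M ih => intro k N; simp only [lift, subst]; rw [ih]
  | app P Q ihP ihQ => intro k N; simp only [lift, subst]; rw [ihP, ihQ]

theorem subst_subst (M : Lam) : ∀ j k N P, j ≤ k →
    subst (subst M j N) k P = subst (subst M (k+1) (lift j P)) j (subst N k P) := by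
  induction M with
  | var n =>
    intro j k N P h
    simp only [subst]
    split_ifs <;> (try simp only [subst, subst_lift]) <;> (try split_ifs) <;>
      first | rfl | omega
  | lam M ih =>
    intro j k N P h
    simp only [subst]
    rw [ih _ _ _ _ (by omega), lift_lift _ 0 j (by omega), lift_subst_ge _ 0 k _ (by omega)]
  | app A B ihA ihB => intro j k N P h; simp only [subst]; rw [ihA _ _ _ _ h, ihB _ _ _ _ h]

theorem count_lift (M : Lam) : ∀ d k, count k (lift d M) =
    if k < d then count k M else if k = d then 0 else count (k-1) M := by
  induction M with
  | var n => intro d k; simp only [lift]; split_ifs <;> simp only [count] <;> split_ifs <;> omega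
  | lam M ih =>
    intro d k; simp only [lift, count]; rw [ih]
    split_ifs <;> first | rfl | omega | (congr 1; omega)
  | app P Q ihP ihQ => intro d k; simp only [lift, count]; rw [ihP, ihQ]; split_ifs <;> rfl

theorem count_subst (M : Lam) : ∀ k j N, count k (subst M j N) =
    (if k < j then count k M else count (k+1) M) + count j M * count k N := by
  induction M with
  | var n =>
    intro k j N
    simp only [subst]
    split_ifs <;> simp only [count] <;> split_ifs <;> omega
  | lam M ih =>
    intro k j N; simp only [subst, count]; rw [ih, count_lift]
    simp
  | app P Q ihP ihQ =>
    intro k j N; simp only [subst, count]; rw [ihP, ihQ]; split_ifs <;> ring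

theorem lamI_lift (M : Lam) : ∀ d, LamI M → LamI (lift d M) := by
  induction M with
  | var n => intro d _; simp only [lift]; split_ifs <;> trivial
  | lam M ih =>
    intro d h; refine ⟨ih _ h.1, ?_⟩
    rw [count_lift]; simpa using h.2
  | app P Q ihP ihQ => intro d h; exact ⟨ihP _ h.1, ihQ _ h.2⟩

theorem lamI_subst (M : Lam) : ∀ k N, LamI M → LamI N → LamI (subst M k N) := by
  induction M with
  | var n => intro k N _ h; simp only [subst]; split_ifs <;> first | exact h | trivial
  | lam M ih =>
    intro k N h hN; refine ⟨ih _ _ h.1 (lamI_lift _ _ hN), ?_⟩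
    rw [count_subst]; have := h.2; simp; omega
  | app P Q ihP ihQ => intro k N h hN; exact ⟨ihP _ _ h.1 hN, ihQ _ _ h.2 hN⟩

theorem Beta.count_pos {M M' : Lam} (h : Beta M M') : LamI M → ∀ k, 0 < count k M → 0 < count k M' := by
  induction h with
  | beta M N =>
    intro hI k hk
    have h0 := hI.1.2
    simp only [count] at hk
    rw [count_subst]
    simp only [Nat.not_lt_zero, if_false]
    rcases Nat.eq_zero_or_pos (count (k+1) M) with h | h
    · have : 0 < count k N := by omega
      have := Nat.mul_pos h0 this
      omega
    · omega
  | lam _ ih => intro hI k hk; exact ih hI.1 _ hk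
  | appL _ ih =>
    intro hI k hk; simp only [count] at hk ⊢
    have := ih hI.1 k; omega
  | appR _ ih =>
    intro hI k hk; simp only [count] at hk ⊢
    have := ih hI.2 k; omega

theorem Beta.lamI {M M' : Lam} (h : Beta M M') : LamI M → LamI M' := by
  induction h with
  | beta M N => intro hI; exact lamI_subst _ _ _ hI.1.1 hI.2
  | lam h ih => intro hI; exact ⟨ih hI.1, h.count_pos hI.1 _ hI.2⟩
  | appL _ ih => intro hI; exact ⟨ih hI.1, hI.2⟩
  | appR _ ih => intro hI; exact ⟨hI.1, ih hI.2⟩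

theorem Beta.lift {M M' : Lam} (h : Beta M M') : ∀ d, Beta (lift d M) (lift d M') := by
  induction h with
  | beta M N => intro d; rw [lift_subst_le _ _ _ _ (Nat.zero_le _)]; exact Beta.beta _ _
  | lam _ ih => intro d; exact Beta.lam (ih _)
  | appL _ ih => intro d; exact Beta.appL (ih _)
  | appR _ ih => intro d; exact Beta.appR (ih _)

theorem Beta.subst {M M' : Lam} (h : Beta M M') : ∀ k N, Beta (subst M k N) (subst M' k N) := by
  induction h with
  | beta M N => intro k P; rw [subst_subst _ _ _ _ _ (Nat.zero_le _)]; exact Beta.beta _ _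
  | lam _ ih => intro d _; exact Beta.lam (ih _ _)
  | appL _ ih => intro d _; exact Beta.appL (ih _ _)
  | appR _ ih => intro d _; exact Beta.appR (ih _ _)

open Relation

theorem subst_arg_zero (M : Lam) : ∀ k N N', count k M = 0 → subst M k N = subst M k N' := by
  induction M with
  | var n =>
    intro k N N' h
    simp only [count] at h
    simp only [subst]; split_ifs <;> simp_all
  | lam M ih => intro k N N' h; simp only [subst]; rw [ih _ _ _ h]
  | app P Q ihP ihQ =>
    intro k N N' h
    simp only [count] at h
    simp only [subst]; rw [ihP k N N' (by omega), ihQ k N N' (by omega)]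

theorem subst_arg (M : Lam) : ∀ k N N', Beta N N' → 0 < count k M →
    TransGen Beta (subst M k N) (subst M k N') := by
  induction M with
  | var n =>
    intro k N N' h hc
    simp only [count] at hc
    simp only [subst]
    split_ifs at * <;> first | exact .single h | omega
  | lam M ih =>
    intro k N N' h hc
    exact (ih _ _ _ (h.lift 0) hc).lift Lam.lam (fun _ _ h => Beta.lam h)
  | app P Q ihP ihQ =>
    intro k N N' h hc
    simp only [count] at hc
    simp only [subst]
    rcases Nat.eq_zero_or_pos (count k P) with h0 | h0
    · rw [subst_arg_zero P k N N' h0]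
      exact (ihQ _ _ _ h (by omega)).lift (Lam.app _) (fun _ _ h => Beta.appR h)
    · have h1 := (ihP _ _ _ h h0).lift (fun X => Lam.app X (subst Q k N)) (fun _ _ h => Beta.appL h)
      rcases Nat.eq_zero_or_pos (count k Q) with h2 | h2
      · rw [subst_arg_zero Q k N' N h2]; exact h1
      · exact h1.trans ((ihQ _ _ _ h h2).lift (Lam.app _) (fun _ _ h => Beta.appR h))

end Lam

/-- λ-terms in which some β-redexes are marked: `red P Q` is the marked redex `(λ P) Q`. -/
inductive MLam : Type
  | var : ℕ → MLam
  | lam : MLam → MLam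
  | app : MLam → MLam → MLam
  | red : MLam → MLam → MLam

namespace MLam

open Relation

def lift (d : ℕ) : MLam → MLam
  | var n => if n < d then var n else var (n + 1)
  | lam M => lam (lift (d + 1) M)
  | app P Q => app (lift d P) (lift d Q)
  | red P Q => red (lift (d + 1) P) (lift d Q)

def subst : MLam → ℕ → MLam → MLam
  | var n, k, N => if n = k then N else if k < n then var (n - 1) else var n
  | lam M, k, N => lam (subst M (k + 1) (lift 0 N))
  | app P Q, k, N => app (subst P k N) (subst Q k N)
  | red P Q, k, N => red (subst P (k + 1) (lift 0 N)) (subst Q k N)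

/-- Forget the marks. -/
def erase : MLam → Lam
  | var n => .var n
  | lam M => .lam (erase M)
  | app P Q => .app (erase P) (erase Q)
  | red P Q => .app (.lam (erase P)) (erase Q)

/-- Contract all the marked redexes. -/
def dev : MLam → Lam
  | var n => .var n
  | lam M => .lam (dev M)
  | app P Q => .app (dev P) (dev Q)
  | red P Q => Lam.subst (dev P) 0 (dev Q)

def cons (v : ℕ) (ρ : ℕ → ℕ) : ℕ → ℕ
  | 0 => v
  | n + 1 => ρ n

/-- A weight that decreases when a marked redex is contracted. -/
def wt : MLam → (ℕ → ℕ) → ℕ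
  | var n, ρ => ρ n
  | lam M, ρ => wt M (cons 0 ρ)
  | app P Q, ρ => wt P ρ + wt Q ρ
  | red P Q, ρ => wt P (cons (wt Q ρ) ρ) + wt Q ρ + 1

/-- Embedding with no marks. -/
def emb : Lam → MLam
  | .var n => var n
  | .lam M => lam (emb M)
  | .app P Q => app (emb P) (emb Q)

theorem erase_emb (M : Lam) : erase (emb M) = M := by
  induction M <;> simp_all [emb, erase]

theorem dev_emb (M : Lam) : dev (emb M) = M := by
  induction M <;> simp_all [emb, dev]

theorem erase_lift (A : MLam) : ∀ d, erase (lift d A) = Lam.lift d (erase A) := by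
  induction A with
  | var n => intro d; simp only [lift, erase, Lam.lift]; split_ifs <;> rfl
  | _ => intro d; simp_all [lift, erase, Lam.lift]

theorem erase_subst (A : MLam) : ∀ k B, erase (subst A k B) = Lam.subst (erase A) k (erase B) := by
  induction A with
  | var n => intro k B; simp only [subst, erase, Lam.subst]; split_ifs <;> rfl
  | _ => intro d; simp_all [subst, erase, Lam.subst, erase_lift]

theorem dev_lift (A : MLam) : ∀ d, dev (lift d A) = Lam.lift d (dev A) := by
  induction A with
  | var n => intro d; simp only [lift, dev, Lam.lift]; split_ifs <;> rfl
  | red P Q ihP ihQ =>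
    intro d; simp only [lift, dev]
    rw [ihP, ihQ, Lam.lift_subst_le _ _ _ _ (Nat.zero_le _)]
  | _ => intro d; simp_all [lift, dev, Lam.lift]

theorem dev_subst (A : MLam) : ∀ k B, dev (subst A k B) = Lam.subst (dev A) k (dev B) := by
  induction A with
  | var n => intro k B; simp only [subst, dev, Lam.subst]; split_ifs <;> rfl
  | red P Q ihP ihQ =>
    intro k B; simp only [subst, dev]
    rw [ihP, ihQ, dev_lift, Lam.subst_subst _ _ _ _ _ (Nat.zero_le _)]
  | _ => intro d; simp_all [subst, dev, Lam.subst, dev_lift]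

theorem wt_lift (A : MLam) : ∀ d ρ, wt (lift d A) ρ = wt A (fun n => if n < d then ρ n else ρ (n+1)) := by
  have key : ∀ (d v : ℕ) (ρ : ℕ → ℕ), (fun n => if n < d + 1 then cons v ρ n else cons v ρ (n+1)) =
      cons v (fun n => if n < d then ρ n else ρ (n+1)) := by
    intro d v ρ; funext n; cases n <;> simp [cons]
  induction A with
  | var n => intro d ρ; simp only [lift]; split_ifs <;> simp_all [wt]
  | lam A ih => intro d ρ; simp only [lift, wt]; rw [ih, key]
  | app P Q ihP ihQ => intro d ρ; simp only [lift, wt]; rw [ihP, ihQ]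
  | red P Q ihP ihQ => intro d ρ; simp only [lift, wt]; rw [ihP, ihQ, key]

theorem wt_subst (A : MLam) : ∀ k B ρ, wt (subst A k B) ρ =
    wt A (fun n => if n = k then wt B ρ else if k < n then ρ (n-1) else ρ n) := by
  have key : ∀ (k v : ℕ) (B : MLam) (ρ : ℕ → ℕ),
      (fun n => if n = k + 1 then wt (lift 0 B) (cons v ρ)
        else if k + 1 < n then cons v ρ (n-1) else cons v ρ n) =
      cons v (fun n => if n = k then wt B ρ else if k < n then ρ (n-1) else ρ n) := by
    intro k v B ρ
    rw [wt_lift]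
    funext n
    rcases n with _ | _ | n <;> simp [cons, eq_comm]
  induction A with
  | var n => intro k B ρ; simp only [subst]; split_ifs <;> simp_all [wt]
  | lam A ih => intro k B ρ; simp only [subst, wt]; rw [ih, key]
  | app P Q ihP ihQ => intro k B ρ; simp only [subst, wt]; rw [ihP, ihQ]
  | red P Q ihP ihQ => intro k B ρ; simp only [subst, wt]; rw [ihP, ihQ, key]

theorem wt_mono (A : MLam) : ∀ ρ ρ' : ℕ → ℕ, (∀ n, ρ n ≤ ρ' n) → wt A ρ ≤ wt A ρ' := by
  induction A with
  | var n => intro ρ ρ' h; exact h n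
  | lam A ih =>
    intro ρ ρ' h; simp only [wt]; apply ih
    rintro (_ | n) <;> simp [cons, h]
  | app P Q ihP ihQ => intro ρ ρ' h; exact Nat.add_le_add (ihP _ _ h) (ihQ _ _ h)
  | red P Q ihP ihQ =>
    intro ρ ρ' h; simp only [wt]
    have h2 := ihQ _ _ h
    have h1 := ihP (cons (wt Q ρ) ρ) (cons (wt Q ρ') ρ') (by rintro (_ | n) <;> simp [cons, h, h2])
    omega

theorem wt_red (P Q : MLam) (ρ : ℕ → ℕ) : wt (subst P 0 Q) ρ < wt (red P Q) ρ := by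
  rw [wt_subst]
  have : (fun n => if n = 0 then wt Q ρ else if 0 < n then ρ (n-1) else ρ n) = cons (wt Q ρ) ρ := by
    funext n; cases n <;> simp [cons]
  rw [this]; simp only [wt]; omega

theorem count_dev (A : MLam) : ∀ k, LamI (erase A) → 0 < Lam.count k (erase A) →
    0 < Lam.count k (dev A) := by
  induction A with
  | var n => intro k _ h; exact h
  | lam A ih => intro k hI h; exact ih _ hI.1 h
  | app P Q ihP ihQ =>
    intro k hI h
    simp only [erase, dev, Lam.count] at h ⊢
    have := ihP k hI.1; have := ihQ k hI.2; omega
  | red P Q ihP ihQ =>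
    intro k hI h
    simp only [erase, dev, Lam.count] at h ⊢
    rw [Lam.count_subst]
    simp only [Nat.not_lt_zero, if_false]
    have h0 := ihP 0 hI.1.1 hI.1.2
    rcases Nat.eq_zero_or_pos (Lam.count (k+1) (erase P)) with h' | h'
    · have := Nat.mul_pos h0 (ihQ k hI.2 (by omega)); omega
    · have := ihP _ hI.1.1 h'; omega

theorem step (A : MLam) : ∀ N, LamI (erase A) → Lam.Beta (erase A) N →
    ∃ B, erase B = N ∧ ((dev B = dev A ∧ ∀ ρ, wt B ρ < wt A ρ) ∨
      TransGen Lam.Beta (dev A) (dev B)) := by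
  induction A with
  | var n => intro N _ h; cases h
  | lam A ih =>
    intro N hI h
    cases h with
    | lam h =>
      obtain ⟨B, rfl, hB⟩ := ih _ hI.1 h
      refine ⟨lam B, rfl, hB.imp ?_ ?_⟩
      · rintro ⟨h1, h2⟩; exact ⟨by simp only [dev, h1], fun ρ => h2 _⟩
      · intro h; exact h.lift Lam.lam (fun _ _ h => Lam.Beta.lam h)
  | app P Q ihP ihQ =>
    intro N hI h
    simp only [erase] at h
    generalize hX : erase P = X at h
    cases h with
    | beta M =>
      cases P with
      | lam P =>
        simp only [erase, Lam.lam.injEq] at hX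
        subst hX
        refine ⟨subst P 0 Q, erase_subst _ _ _, Or.inr ?_⟩
        rw [dev_subst]; exact .single (Lam.Beta.beta _ _)
      | _ => simp [erase] at hX
    | appL h =>
      subst hX
      obtain ⟨B, rfl, hB⟩ := ihP _ hI.1 h
      refine ⟨app B Q, rfl, hB.imp ?_ ?_⟩
      · rintro ⟨h1, h2⟩
        exact ⟨by simp only [dev, h1], fun ρ => by have := h2 ρ; simp only [wt]; omega⟩
      · intro h; exact h.lift (fun X => Lam.app X (dev Q)) (fun _ _ h => Lam.Beta.appL h)
    | appR h =>
      subst hX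
      obtain ⟨B, rfl, hB⟩ := ihQ _ hI.2 h
      refine ⟨app P B, rfl, hB.imp ?_ ?_⟩
      · rintro ⟨h1, h2⟩
        exact ⟨by simp only [dev, h1], fun ρ => by have := h2 ρ; simp only [wt]; omega⟩
      · intro h; exact h.lift (Lam.app (dev P)) (fun _ _ h => Lam.Beta.appR h)
  | red P Q ihP ihQ =>
    intro N hI h
    simp only [erase] at h
    cases h with
    | beta =>
      exact ⟨subst P 0 Q, erase_subst _ _ _, Or.inl ⟨dev_subst _ _ _, wt_red P Q⟩⟩
    | appL h =>
      cases h with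
      | lam h =>
        obtain ⟨B, rfl, hB⟩ := ihP _ hI.1.1 h
        refine ⟨red B Q, rfl, hB.imp ?_ ?_⟩
        · rintro ⟨h1, h2⟩
          exact ⟨by simp only [dev, h1], fun ρ => by
            have := h2 (cons (wt Q ρ) ρ); simp only [wt]; omega⟩
        · intro h
          exact h.lift (fun X => Lam.subst X 0 (dev Q)) (fun _ _ h => h.subst _ _)
    | appR h =>
      obtain ⟨B, rfl, hB⟩ := ihQ _ hI.2 h
      refine ⟨red P B, rfl, hB.imp ?_ ?_⟩
      · rintro ⟨h1, h2⟩
        refine ⟨by simp only [dev, h1], fun ρ => ?_⟩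
        have h3 := h2 ρ
        have h4 := wt_mono P (cons (wt B ρ) ρ) (cons (wt Q ρ) ρ)
          (by rintro (_ | n) <;> simp [cons]; omega)
        simp only [wt]; omega
      · intro h
        have h0 := count_dev P 0 hI.1.1 hI.1.2
        simp only [dev]
        clear ihP ihQ hI hB
        generalize dev B = Y at h
        induction h with
        | single h => exact Lam.subst_arg _ _ _ _ h h0
        | tail _ h ih => exact ih.trans (Lam.subst_arg _ _ _ _ h h0)

theorem sn_erase {X : Lam} (hX : Acc (fun N M' => TransGen Lam.Beta M' N) X) :
    ∀ A, dev A = X → LamI (erase A) → Lam.StronglyNormalizable (erase A) := by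
  induction hX with
  | intro X _ ih =>
    have aux : ∀ n A, wt A (fun _ => 0) = n → dev A = X → LamI (erase A) →
        Lam.StronglyNormalizable (erase A) := by
      intro n
      induction n using Nat.strong_induction_on with
      | _ n ihn =>
        intro A hn hA hI
        refine Acc.intro _ fun N hN => ?_
        obtain ⟨B, rfl, ⟨h1, h2⟩ | h⟩ := step A N hI hN
        · exact ihn _ (hn ▸ h2 _) B rfl (h1.trans hA) (hN.lamI hI)
        · exact ih _ (hA ▸ h) B rfl (hN.lamI hI)
    exact fun A => aux _ A rfl

theorem exists_mark {M M' : Lam} (h : Lam.Beta M M') : ∃ A, erase A = M ∧ dev A = M' := by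
  induction h with
  | beta M N => exact ⟨red (emb M) (emb N), by simp [erase, erase_emb], by simp [dev, dev_emb]⟩
  | lam _ ih => obtain ⟨A, rfl, rfl⟩ := ih; exact ⟨lam A, rfl, rfl⟩
  | @appL P P' Q _ ih =>
    obtain ⟨A, rfl, rfl⟩ := ih
    exact ⟨app A (emb Q), by simp [erase, erase_emb], by simp [dev, dev_emb]⟩
  | @appR P Q Q' _ ih =>
    obtain ⟨A, rfl, rfl⟩ := ih
    exact ⟨app (emb P) A, by simp [erase, erase_emb], by simp [dev, dev_emb]⟩

theorem sn_expand {M M' : Lam} (hI : LamI M) (h : Lam.Beta M M')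
    (hS : Lam.StronglyNormalizable M') : Lam.StronglyNormalizable M := by
  obtain ⟨A, rfl, rfl⟩ := exists_mark h
  refine sn_erase ?_ A rfl hI
  have h1 := Acc.transGen hS
  have e : TransGen (fun N M' => Lam.Beta M' N) = fun N M' => TransGen Lam.Beta M' N := by
    funext a b; exact propext (Relation.transGen_swap (r := Lam.Beta))
  rwa [e] at h1

end MLam

/-- conservation theorem for the λI-calculus: a λI-term is
β-normalizable iff it is strongly β-normalizable. -/
theorem lambdaI_conservation {M : Lam} (h : LamI M) :
    Lam.BetaNormalizable M ↔ Lam.StronglyNormalizable M := by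
  constructor
  · rintro ⟨N, hMN, hN⟩
    induction hMN using Relation.ReflTransGen.head_induction_on with
    | refl => exact Acc.intro _ fun X hX => absurd ⟨X, hX⟩ hN
    | head hab _ ih => exact MLam.sn_expand h hab (ih (hab.lamI h))
  · intro hS
    clear h
    induction hS with
    | intro X _ ih =>
      by_cases hX : Lam.BetaNF X
      · exact ⟨X, .refl, hX⟩
      · obtain ⟨Y, hY⟩ := not_not.mp hX
        obtain ⟨N, h1, h2⟩ := ih Y hY
        exact ⟨N, .head hY h1, h2⟩
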